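/- Under the stated model, if ‖g_y‖_∞ < ∞, then for every p ≥ 1 there exists a constant B_p depending only on p such that for every bounded measurable f : 𝒳 → ℝ, E[|π₀(f·l_y) − π₀^N(f·l_y)|^p] + E[|π₀^N(f·(l_y − l_y^M))|^p] ≤ B_p·‖f‖_∞^p·N^{−p/2}·‖g_y‖_∞^p. -/

import Mathlib

/-
Each of the two errors is an average of `N` i.i.d. bounded centred variables: in the first because
`π₀(f l_y)` is the mean of `f l_y` under `π₀`, in the second because, given the outer sample, the
average `l_y^M` is an unbiased estimator of `l_y`. By Hoeffding's lemma such an average is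
sub-Gaussian with parameter of order `‖f‖² ‖g_y‖² / N`, and the `p`-th absolute moment of a
sub-Gaussian variable with parameter `c` is at most a constant depending on `p` times `c ^ (p / 2)`.
The inner samples enter the second bound only through `|l_y^M| ≤ ‖g_y‖`, so it is uniform in `M`.
-/

open MeasureTheory ProbabilityTheory
open scoped ENNReal

noncomputable section

/-- Joint law of one outer sample `X ~ π₀` together with `M` i.i.d. inner samples
`Z^{1}, …, Z^{M} ~ κ(X, ·)` (conditionally i.i.d. given `X`). -/
def nestedLawOne {𝒳 𝒵 : Type*} [MeasurableSpace 𝒳] [MeasurableSpace 𝒵]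
    (π₀ : Measure 𝒳) (κ : Kernel 𝒳 𝒵) (M : ℕ) : Measure (𝒳 × (Fin M → 𝒵)) :=
  π₀.bind fun x => (Measure.dirac x).prod (Measure.pi fun _ : Fin M => κ x)

/-- Joint law of `N` i.i.d. outer samples, each with its `M` inner samples. -/
def nestedLaw {𝒳 𝒵 : Type*} [MeasurableSpace 𝒳] [MeasurableSpace 𝒵]
    (π₀ : Measure 𝒳) (κ : Kernel 𝒳 𝒵) (N M : ℕ) : Measure (Fin N → 𝒳 × (Fin M → 𝒵)) :=
  Measure.pi fun _ : Fin N => nestedLawOne π₀ κ M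

/-- The approximate likelihood `l_y^M(xⁱ) = (1/M) ∑_j g_y(xⁱ, z^{i,j})`. -/
def likeM {𝒳 𝒵 : Type*} (g : 𝒳 × 𝒵 → ℝ) {M : ℕ} (s : 𝒳 × (Fin M → 𝒵)) : ℝ :=
  (M : ℝ)⁻¹ * ∑ j, g (s.1, s.2 j)

universe u v

section SubGaussian

open scoped NNReal

variable {Ω : Type*} [MeasurableSpace Ω] {μ : Measure Ω}

/-- The constant in the `p`-th absolute moment bound for sub-Gaussian random variables; its order
of growth in `p` is not optimal. -/
def subgaussianMomentConst (p : ℝ) : ℝ := 2 * Real.exp (1 / 2) * p ^ p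

lemma subgaussianMomentConst_pos {p : ℝ} (hp : 0 < p) : 0 < subgaussianMomentConst p := by
  unfold subgaussianMomentConst
  positivity

lemma lintegral_exp_mul_add_exp_neg_mul_le_of_hasSubgaussianMGF {X : Ω → ℝ} {c : ℝ≥0}
    (hX : HasSubgaussianMGF X c μ) (t : ℝ) :
    ∫⁻ ω, ENNReal.ofReal (Real.exp (t * X ω) + Real.exp (-t * X ω)) ∂μ
      ≤ ENNReal.ofReal (2 * Real.exp (c * t ^ 2 / 2)) := by
  have hpos := hX.integrable_exp_mul t
  have hneg := hX.integrable_exp_mul (-t)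
  have hmgf_pos : ∫ ω, Real.exp (t * X ω) ∂μ ≤ Real.exp (c * t ^ 2 / 2) := hX.mgf_le t
  have hmgf_neg : ∫ ω, Real.exp (-t * X ω) ∂μ ≤ Real.exp (c * t ^ 2 / 2) := by
    rw [← neg_sq t]
    exact hX.mgf_le (-t)
  have hsum : Integrable (fun ω => Real.exp (t * X ω) + Real.exp (-t * X ω)) μ := hpos.add hneg
  rw [← ofReal_integral_eq_lintegral_ofReal hsum (ae_of_all _ fun _ => by positivity),
    integral_add hpos hneg, two_mul]
  exact ENNReal.ofReal_le_ofReal (add_le_add hmgf_pos hmgf_neg)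

lemma lintegral_abs_rpow_le_div_rpow_mul_exp_of_hasSubgaussianMGF {X : Ω → ℝ} {c : ℝ≥0} {p t : ℝ}
    (hp : 0 ≤ p) (ht : 0 < t) (hX : HasSubgaussianMGF X c μ) :
    ∫⁻ ω, ENNReal.ofReal (|X ω| ^ p) ∂μ
      ≤ ENNReal.ofReal ((p / t) ^ p * (2 * Real.exp (c * t ^ 2 / 2))) := by
  have hpointwise (ω : Ω) :
      |X ω| ^ p ≤ (p / t) ^ p * (Real.exp (t * X ω) + Real.exp (-t * X ω)) :=
    calc |X ω| ^ p ≤ (p / t) ^ p * max (Real.exp (t * X ω)) (Real.exp (-t * X ω)) :=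
          rpow_abs_le_mul_max_exp_of_pos _ hp ht
      _ ≤ (p / t) ^ p * (Real.exp (t * X ω) + Real.exp (-t * X ω)) := by
          gcongr
          exact max_le_add_of_nonneg (Real.exp_pos _).le (Real.exp_pos _).le
  calc ∫⁻ ω, ENNReal.ofReal (|X ω| ^ p) ∂μ
      ≤ ∫⁻ ω, ENNReal.ofReal ((p / t) ^ p)
          * ENNReal.ofReal (Real.exp (t * X ω) + Real.exp (-t * X ω)) ∂μ :=
        lintegral_mono fun ω => (ENNReal.ofReal_le_ofReal (hpointwise ω)).trans_eq
          (ENNReal.ofReal_mul (by positivity))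
    _ ≤ ENNReal.ofReal ((p / t) ^ p) * ENNReal.ofReal (2 * Real.exp (c * t ^ 2 / 2)) := by
        rw [lintegral_const_mul' _ _ ENNReal.ofReal_ne_top]
        gcongr
        exact lintegral_exp_mul_add_exp_neg_mul_le_of_hasSubgaussianMGF hX t
    _ = ENNReal.ofReal ((p / t) ^ p * (2 * Real.exp (c * t ^ 2 / 2))) :=
        (ENNReal.ofReal_mul (by positivity)).symm

lemma lintegral_abs_rpow_le_of_hasSubgaussianMGF {X : Ω → ℝ} {c : ℝ≥0} {p : ℝ} (hp : 0 < p)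
    (hX : HasSubgaussianMGF X c μ) :
    ∫⁻ ω, ENNReal.ofReal (|X ω| ^ p) ∂μ
      ≤ ENNReal.ofReal (subgaussianMomentConst p * √c ^ p) := by
  rcases eq_or_ne c 0 with rfl | hc
  · have hX_zero : ∀ᵐ ω ∂μ, ENNReal.ofReal (|X ω| ^ p) = 0 :=
      hX.ae_eq_zero_of_hasSubgaussianMGF_zero.mono fun ω hω => by
        simp [hω, Real.zero_rpow hp.ne']
    simp [lintegral_congr_ae hX_zero]
  have hc_pos : (0 : ℝ) < c := by exact_mod_cast pos_of_ne_zero hc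
  have hexp : (c : ℝ) * (√c)⁻¹ ^ 2 / 2 = 1 / 2 := by
    rw [inv_pow, Real.sq_sqrt hc_pos.le, mul_inv_cancel₀ hc_pos.ne']
  refine (lintegral_abs_rpow_le_div_rpow_mul_exp_of_hasSubgaussianMGF hp.le
    (inv_pos.2 (Real.sqrt_pos.2 hc_pos)) hX).trans_eq ?_
  rw [hexp, div_inv_eq_mul, Real.mul_rpow hp.le (Real.sqrt_nonneg _), subgaussianMomentConst]
  ring_nf

lemma hasSubgaussianMGF_average_of_iIndepFun {ι : Type*} [Fintype ι] {X : ι → Ω → ℝ} {c : ℝ≥0}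
    (hindep : iIndepFun X μ) (hX : ∀ i, HasSubgaussianMGF (X i) c μ) :
    HasSubgaussianMGF (fun ω => (Fintype.card ι : ℝ)⁻¹ * ∑ i, X i ω) (c / Fintype.card ι) μ := by
  have hparam : c / Fintype.card ι = (Fintype.card ι : ℝ≥0)⁻¹ ^ 2 * ∑ _ : ι, c := by
    rcases eq_or_ne (Fintype.card ι : ℝ≥0) 0 with hcard | hcard
    · simp [hcard]
    · rw [Finset.sum_const, Finset.card_univ, nsmul_eq_mul]
      field_simp
  rw [hparam]
  exact (HasSubgaussianMGF.sum_of_iIndepFun hindep fun i _ => hX i).const_mul _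

lemma lintegral_pi_abs_integral_sub_average_rpow_le [IsProbabilityMeasure μ] {ι : Type*}
    [Fintype ι] [Nonempty ι] {p : ℝ} (hp : 0 < p) {Y : Ω → ℝ} (hY : AEMeasurable Y μ) {C : ℝ}
    (hC : ∀ᵐ ω ∂μ, |Y ω| ≤ C) :
    ∫⁻ ω, ENNReal.ofReal (|∫ a, Y a ∂μ - (Fintype.card ι : ℝ)⁻¹ * ∑ i, Y (ω i)| ^ p)
        ∂(Measure.pi fun _ : ι => μ)
      ≤ ENNReal.ofReal (subgaussianMomentConst p * (C / √(Fintype.card ι)) ^ p) := by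
  have hC_nonneg : 0 ≤ C := hC.exists.elim fun _ h => (abs_nonneg _).trans h
  set m : ℝ := ∫ a, Y a ∂μ
  have hoeffding : HasSubgaussianMGF (fun a => Y a - m) ((‖C - -C‖₊ / 2) ^ 2) μ :=
    hasSubgaussianMGF_of_mem_Icc hY (hC.mono fun _ h => abs_le.1 h)
  have hcoord (i : ι) : HasSubgaussianMGF (fun ω : ι → Ω => Y (ω i) - m)
      ((‖C - -C‖₊ / 2) ^ 2) (Measure.pi fun _ => μ) := by
    have heval := measurePreserving_eval (fun _ : ι => μ) i
    rw [← heval.map_eq] at hoeffding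
    exact hoeffding.of_map heval.measurable.aemeasurable
  have hindep : iIndepFun (fun i (ω : ι → Ω) => Y (ω i) - m) (Measure.pi fun _ => μ) :=
    iIndepFun_pi fun _ => hY.sub_const _
  have hbound := lintegral_abs_rpow_le_of_hasSubgaussianMGF hp
    (hasSubgaussianMGF_average_of_iIndepFun hindep hcoord)
  have hsqrt : √(((‖C - -C‖₊ / 2) ^ 2 / Fintype.card ι : ℝ≥0) : ℝ) = C / √(Fintype.card ι) := by
    have hradius : ‖C - -C‖ / 2 = C := by
      rw [Real.norm_of_nonneg (by linarith)]
      ring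
    push_cast
    rw [hradius, Real.sqrt_div (sq_nonneg _), Real.sqrt_sq hC_nonneg]
  rw [hsqrt] at hbound
  refine (lintegral_congr fun ω => ?_).trans_le hbound
  rw [abs_sub_comm, Finset.sum_sub_distrib, mul_sub, Finset.sum_const, Finset.card_univ,
    nsmul_eq_mul, inv_mul_cancel_left₀ (by simp)]

end SubGaussian

section PiKernel

variable {ι α : Type*} [Fintype ι] [MeasurableSpace α] {β : ι → Type*}
  [∀ i, MeasurableSpace (β i)] (κ : ∀ i, Kernel α (β i)) [∀ i, IsMarkovKernel (κ i)]

/-- The finite product of Markov kernels from a common source: given the source point, the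
coordinates are drawn independently, the `i`-th one from `κ i`. It makes the conditional law of
the inner samples a kernel. -/
def piKernel : Kernel α (∀ i, β i) where
  toFun a := Measure.pi fun i => κ i a
  measurable' := by
    refine Measurable.measure_of_isPiSystem_of_isProbabilityMeasure
      generateFrom_pi.symm isPiSystem_pi ?_
    rintro _ ⟨s, hs, rfl⟩
    simp_rw [Measure.pi_pi]
    exact Finset.measurable_prod _ fun i _ => (κ i).measurable_coe (hs i (Set.mem_univ i))

lemma piKernel_apply (a : α) : piKernel κ a = Measure.pi fun i => κ i a := rfl

instance : IsMarkovKernel (piKernel κ) :=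
  ⟨fun a => by rw [piKernel_apply]; infer_instance⟩

variable {κ} {a : α} {i : ι}

lemma integrable_eval_piKernel {h : β i → ℝ} (hh : Integrable h (κ i a)) :
    Integrable (fun b => h (b i)) (piKernel κ a) :=
  integrable_comp_eval (μ := fun i => κ i a) hh

lemma integral_eval_piKernel {h : β i → ℝ} (hh : AEStronglyMeasurable h (κ i a)) :
    ∫ b, h (b i) ∂(piKernel κ a) = ∫ y, h y ∂(κ i a) :=
  integral_comp_eval (μ := fun i => κ i a) hh

end PiKernel

section NestedSampling

variable {𝒳 𝒵 : Type*} {N M : ℕ} {f : 𝒳 → ℝ} {g : 𝒳 × 𝒵 → ℝ} {p Cf Cg : ℝ}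

lemma abs_likeM_le (hM : M ≠ 0) (hgC : ∀ w, |g w| ≤ Cg) (s : 𝒳 × (Fin M → 𝒵)) :
    |likeM g s| ≤ Cg := by
  have hM_pos : (0 : ℝ) < M := by positivity
  rw [likeM, abs_mul, abs_of_pos (inv_pos.2 hM_pos), inv_mul_le_iff₀ hM_pos]
  calc |∑ j, g (s.1, s.2 j)| ≤ ∑ j, |g (s.1, s.2 j)| := Finset.abs_sum_le_sum_abs _ _
    _ ≤ ∑ _ : Fin M, Cg := Finset.sum_le_sum fun j _ => hgC _
    _ = M * Cg := by simp

variable [MeasurableSpace 𝒳] [MeasurableSpace 𝒵]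

/-- The likelihood `l_y(x) = ∫ g_y(x, z) κ(x, dz)`. -/
def likelihood (κ : Kernel 𝒳 𝒵) (g : 𝒳 × 𝒵 → ℝ) (x : 𝒳) : ℝ := ∫ z, g (x, z) ∂(κ x)

lemma measurable_likelihood {κ : Kernel 𝒳 𝒵} [IsSFiniteKernel κ] (hg : Measurable g) :
    Measurable (likelihood κ g) :=
  (hg.stronglyMeasurable.integral_kernel_prod_right' (κ := κ)).measurable

lemma measurable_likeM (hg : Measurable g) : Measurable (likeM (M := M) g) := by
  unfold likeM
  fun_prop

variable {π₀ : Measure 𝒳} {κ : Kernel 𝒳 𝒵} [IsMarkovKernel κ]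

lemma abs_likelihood_le (hgC : ∀ w, |g w| ≤ Cg) (x : 𝒳) : |likelihood κ g x| ≤ Cg := by
  have hnorm : ∀ᵐ z ∂(κ x), ‖g (x, z)‖ ≤ Cg := ae_of_all _ fun z => hgC (x, z)
  simpa [likelihood] using norm_integral_le_of_norm_le_const hnorm

lemma abs_mul_likelihood_le (hfC : ∀ x, |f x| ≤ Cf) (hgC : ∀ w, |g w| ≤ Cg) (x : 𝒳) :
    |f x * likelihood κ g x| ≤ Cf * Cg := by
  rw [abs_mul]
  exact mul_le_mul (hfC x) (abs_likelihood_le hgC x) (abs_nonneg _) ((abs_nonneg _).trans (hfC x))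

lemma abs_mul_likelihood_sub_likeM_le (hM : M ≠ 0) (hfC : ∀ x, |f x| ≤ Cf)
    (hgC : ∀ w, |g w| ≤ Cg) (s : 𝒳 × (Fin M → 𝒵)) :
    |f s.1 * (likelihood κ g s.1 - likeM g s)| ≤ 2 * (Cf * Cg) := by
  have hdiff : |likelihood κ g s.1 - likeM g s| ≤ 2 * Cg :=
    calc |likelihood κ g s.1 - likeM g s| ≤ |likelihood κ g s.1| + |likeM g s| := abs_sub _ _
      _ ≤ 2 * Cg := by linarith [abs_likelihood_le (κ := κ) hgC s.1, abs_likeM_le hM hgC s]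
  calc |f s.1 * (likelihood κ g s.1 - likeM g s)|
      = |f s.1| * |likelihood κ g s.1 - likeM g s| := abs_mul _ _
    _ ≤ Cf * (2 * Cg) :=
        mul_le_mul (hfC s.1) hdiff (abs_nonneg _) ((abs_nonneg _).trans (hfC s.1))
    _ = 2 * (Cf * Cg) := by ring

lemma nestedLawOne_eq_compProd [SFinite π₀] :
    nestedLawOne π₀ κ M = π₀ ⊗ₘ piKernel fun _ : Fin M => κ := by
  rw [Measure.compProd_eq_comp_prod, nestedLawOne]
  congr with x : 1
  rw [Kernel.prod_apply, Kernel.id_apply, piKernel_apply]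

instance [IsProbabilityMeasure π₀] : IsProbabilityMeasure (nestedLawOne π₀ κ M) := by
  rw [nestedLawOne_eq_compProd]
  infer_instance

lemma integral_fst_nestedLawOne [SFinite π₀] {h : 𝒳 → ℝ} (hh : AEStronglyMeasurable h π₀) :
    ∫ s, h s.1 ∂(nestedLawOne π₀ κ M) = ∫ x, h x ∂π₀ := by
  have hfst : (nestedLawOne π₀ κ M).map Prod.fst = π₀ := by
    rw [nestedLawOne_eq_compProd]
    exact Measure.fst_compProd _ _
  rw [← hfst] at hh
  rw [← integral_map measurable_fst.aemeasurable hh, hfst]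

lemma integrable_likeM_piKernel {x : 𝒳} (hg : Integrable (fun z => g (x, z)) (κ x)) :
    Integrable (fun z => likeM g (x, z)) (piKernel (fun _ : Fin M => κ) x) :=
  (integrable_finsetSum _ fun j _ =>
    integrable_eval_piKernel (κ := fun _ : Fin M => κ) (i := j) hg).const_mul _

lemma integral_likeM_piKernel (hM : M ≠ 0) {x : 𝒳} (hg : Integrable (fun z => g (x, z)) (κ x)) :
    ∫ z, likeM g (x, z) ∂(piKernel (fun _ : Fin M => κ) x) = likelihood κ g x := by
  have hcoord (j : Fin M) :
      ∫ z, g (x, z j) ∂(piKernel (fun _ : Fin M => κ) x) = likelihood κ g x :=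
    integral_eval_piKernel (κ := fun _ : Fin M => κ) (i := j) hg.aestronglyMeasurable
  simp only [likeM]
  rw [integral_const_mul, integral_finsetSum _ fun j _ =>
    integrable_eval_piKernel (κ := fun _ : Fin M => κ) (i := j) hg]
  simp [hcoord, hM]

lemma integral_mul_likelihood_sub_likeM [SFinite π₀] (hM : M ≠ 0)
    (hg : ∀ᵐ x ∂π₀, Integrable (fun z => g (x, z)) (κ x))
    (hint : Integrable (fun s => f s.1 * (likelihood κ g s.1 - likeM g s)) (nestedLawOne π₀ κ M)) :
    ∫ s, f s.1 * (likelihood κ g s.1 - likeM g s) ∂(nestedLawOne π₀ κ M) = 0 := by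
  rw [nestedLawOne_eq_compProd] at hint ⊢
  rw [Measure.integral_compProd hint]
  refine integral_eq_zero_of_ae (hg.mono fun x hx => ?_)
  dsimp only [Pi.zero_apply]
  rw [integral_const_mul, integral_sub (integrable_const _) (integrable_likeM_piKernel hx),
    integral_likeM_piKernel hM hx]
  simp

variable [IsProbabilityMeasure π₀]

lemma lintegral_nestedLaw_abs_integral_sub_average_rpow_le (hp : 0 < p) (hN : N ≠ 0)
    {Y : 𝒳 × (Fin M → 𝒵) → ℝ} (hY : AEMeasurable Y (nestedLawOne π₀ κ M)) {C : ℝ}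
    (hC : ∀ᵐ s ∂(nestedLawOne π₀ κ M), |Y s| ≤ C) :
    ∫⁻ ω, ENNReal.ofReal
        (|∫ s, Y s ∂(nestedLawOne π₀ κ M) - (N : ℝ)⁻¹ * ∑ i, Y (ω i)| ^ p) ∂(nestedLaw π₀ κ N M)
      ≤ ENNReal.ofReal (subgaussianMomentConst p * (C / √N) ^ p) := by
  have : NeZero N := ⟨hN⟩
  simpa only [nestedLaw, Fintype.card_fin] using
    lintegral_pi_abs_integral_sub_average_rpow_le (ι := Fin N) hp hY hC

lemma lintegral_outer_error_rpow_le (hp : 0 < p) (hN : N ≠ 0) (hf : Measurable f)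
    (hfC : ∀ x, |f x| ≤ Cf) (hg : Measurable g) (hgC : ∀ w, |g w| ≤ Cg) :
    ∫⁻ ω, ENNReal.ofReal (|∫ x, f x * likelihood κ g x ∂π₀
        - (N : ℝ)⁻¹ * ∑ i, f (ω i).1 * likelihood κ g (ω i).1| ^ p) ∂(nestedLaw π₀ κ N M)
      ≤ ENNReal.ofReal (subgaussianMomentConst p * (Cf * Cg / √N) ^ p) := by
  have hfl : Measurable fun x => f x * likelihood κ g x := hf.mul (measurable_likelihood hg)
  rw [← integral_fst_nestedLawOne (κ := κ) (M := M) hfl.aestronglyMeasurable]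
  exact lintegral_nestedLaw_abs_integral_sub_average_rpow_le hp hN
    (hfl.comp measurable_fst).aemeasurable (ae_of_all _ fun s => abs_mul_likelihood_le hfC hgC s.1)

lemma lintegral_inner_error_rpow_le (hp : 0 < p) (hN : N ≠ 0) (hM : M ≠ 0) (hf : Measurable f)
    (hfC : ∀ x, |f x| ≤ Cf) (hg : Measurable g) (hgC : ∀ w, |g w| ≤ Cg) :
    ∫⁻ ω, ENNReal.ofReal (|(N : ℝ)⁻¹ * ∑ i, f (ω i).1 *
        (likelihood κ g (ω i).1 - likeM g (ω i))| ^ p) ∂(nestedLaw π₀ κ N M)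
      ≤ ENNReal.ofReal (subgaussianMomentConst p * (2 * (Cf * Cg) / √N) ^ p) := by
  have hmeas : Measurable fun s : 𝒳 × (Fin M → 𝒵) => f s.1 * (likelihood κ g s.1 - likeM g s) :=
    (hf.comp measurable_fst).mul
      (((measurable_likelihood hg).comp measurable_fst).sub (measurable_likeM hg))
  have hbound := abs_mul_likelihood_sub_likeM_le (κ := κ) hM hfC hgC
  have hg_int (x : 𝒳) : Integrable (fun z => g (x, z)) (κ x) :=
    .of_bound (hg.comp measurable_prodMk_left).aestronglyMeasurable Cg (ae_of_all _ fun _ => hgC _)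
  have hmean := integral_mul_likelihood_sub_likeM (π₀ := π₀) hM (ae_of_all _ hg_int)
    (.of_bound hmeas.aestronglyMeasurable _ (ae_of_all _ hbound))
  simpa only [hmean, zero_sub, abs_neg] using
    lintegral_nestedLaw_abs_integral_sub_average_rpow_le (π₀ := π₀) (κ := κ) hp hN
      hmeas.aemeasurable (ae_of_all _ hbound)

end NestedSampling

theorem stmt9_general (p : ℝ) (hp : 0 < p) :
    ∃ B : ℝ, 0 < B ∧
      ∀ (𝒳 : Type u) (𝒵 : Type v) [MeasurableSpace 𝒳] [MeasurableSpace 𝒵]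
        (π₀ : Measure 𝒳) [IsProbabilityMeasure π₀]
        (κ : Kernel 𝒳 𝒵) [IsMarkovKernel κ]
        (g : 𝒳 × 𝒵 → ℝ), Measurable g →
          ∀ (Cg : ℝ), (∀ w, |g w| ≤ Cg) →
          ∀ (N M : ℕ), N ≠ 0 → M ≠ 0 →
            ∀ (f : 𝒳 → ℝ), Measurable f → ∀ (Cf : ℝ), (∀ x, |f x| ≤ Cf) →
              (∫⁻ ω, ENNReal.ofReal (|∫ x, f x * likelihood κ g x ∂π₀
                  - (N : ℝ)⁻¹ * ∑ i, f (ω i).1 * likelihood κ g (ω i).1| ^ p)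
                ∂(nestedLaw π₀ κ N M))
              + (∫⁻ ω, ENNReal.ofReal (|(N : ℝ)⁻¹ * ∑ i, f (ω i).1 *
                  (likelihood κ g (ω i).1 - likeM g (ω i))| ^ p)
                ∂(nestedLaw π₀ κ N M))
              ≤ ENNReal.ofReal (B * Cf ^ p * (√N)⁻¹ ^ p * Cg ^ p) := by
  have hK := subgaussianMomentConst_pos hp
  refine ⟨subgaussianMomentConst p * (1 + 2 ^ p), by positivity, ?_⟩
  intro 𝒳 𝒵 _ _ π₀ _ κ _ g hg Cg hgC N M hN hM f hf Cf hfC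
  obtain ⟨x⟩ := nonempty_of_isProbabilityMeasure π₀
  have hCf : 0 ≤ Cf := (abs_nonneg _).trans (hfC x)
  have hCg : 0 ≤ Cg := (abs_nonneg _).trans (abs_likelihood_le (κ := κ) hgC x)
  refine (add_le_add (lintegral_outer_error_rpow_le hp hN hf hfC hg hgC)
    (lintegral_inner_error_rpow_le hp hN hM hf hfC hg hgC)).trans_eq ?_
  rw [← ENNReal.ofReal_add (by positivity) (by positivity), div_eq_mul_inv, div_eq_mul_inv,
    mul_assoc 2, Real.mul_rpow zero_le_two (by positivity), Real.mul_rpow (by positivity)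
    (by positivity), Real.mul_rpow hCf hCg]
  ring_nf

/-- If `‖g_y‖_∞ < ∞`, then for every `p ≥ 1` there is a constant `B_p`
depending only on `p` (independent of the model, of `N`, `M` and `f`) such that
`E[|π₀(f l_y) − π₀^N(f l_y)|^p] + E[|π₀^N(f (l_y − l_y^M))|^p]
  ≤ B_p ‖f‖_∞^p N^{−p/2} ‖g_y‖_∞^p`
(here `Cg` is any uniform bound on the nonnegative likelihood `g_y`). -/
theorem stmt9 (p : ℝ) (hp : 1 ≤ p) :
    ∃ B : ℝ, 0 < B ∧
      ∀ (𝒳 : Type u) (𝒵 : Type v) [MeasurableSpace 𝒳] [MeasurableSpace 𝒵]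
        (π₀ : Measure 𝒳) [IsProbabilityMeasure π₀]
        (κ : Kernel 𝒳 𝒵) [IsMarkovKernel κ]
        (g : 𝒳 × 𝒵 → ℝ), Measurable g → (∀ w, 0 ≤ g w) →
          ∀ (Cg : ℝ), (∀ w, g w ≤ Cg) →
          ∀ (N M : ℕ), 1 ≤ N → 1 ≤ M →
            ∀ (f : 𝒳 → ℝ), Measurable f → ∀ (Cf : ℝ), (∀ x, |f x| ≤ Cf) →
              (∫⁻ ω, ENNReal.ofReal
                  (|(∫ x, f x * (∫ z, g (x, z) ∂(κ x)) ∂π₀)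
                      - (N : ℝ)⁻¹ * ∑ i, f (ω i).1 * (∫ z, g ((ω i).1, z) ∂(κ (ω i).1))| ^ p)
                ∂(nestedLaw π₀ κ N M))
              + (∫⁻ ω, ENNReal.ofReal
                  (|(N : ℝ)⁻¹ * ∑ i, f (ω i).1 *
                      ((∫ z, g ((ω i).1, z) ∂(κ (ω i).1)) - likeM g (ω i))| ^ p)
                ∂(nestedLaw π₀ κ N M))
              ≤ ENNReal.ofReal (B * Cf ^ p * ((Real.sqrt N)⁻¹) ^ p * Cg ^ p) := by
  obtain ⟨B, hB, hbound⟩ := stmt9_general.{u, v} p (zero_lt_one.trans_le hp)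
  exact ⟨B, hB, fun 𝒳 𝒵 _ _ π₀ _ κ _ g hg hg0 Cg hgC N M hN hM =>
    hbound 𝒳 𝒵 π₀ κ g hg Cg (fun w => (abs_of_nonneg (hg0 w)).trans_le (hgC w)) N M
      (Nat.one_le_iff_ne_zero.1 hN) (Nat.one_le_iff_ne_zero.1 hM)⟩

end
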